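/- Let E = B₁ × ⋯ × Bₙ ⊆ Kⁿ be a product of balls (each Bᵢ a ball in K, possibly K itself), and let φ : E → E be a risometry from E onto its image X ⊆ E. Then X = E, i.e. φ is surjective onto E. -/

import Mathlib

noncomputable section

open scoped Classical Pointwise

section Preamble

variable {K : Type*} [Field K] {Γ : Type*} [LinearOrderedCommGroupWithZero Γ]

instance (priority := 100) : OrderBot Γ where
  bot := 0
  bot_le _ := zero_le'

/-- The max-valuation on `K^n`: `v(a) = maxᵢ v(aᵢ)`. -/
def vv (v : Valuation K Γ) {n : ℕ} (x : Fin n → K) : Γ :=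
  Finset.univ.sup fun i => v (x i)

/-- `rvEq v x y` expresses `rv(x) = rv(y)` in `RV⁽ⁿ⁾ = Kⁿ/∼`, where
`x ∼ y` iff `v(x−y) < v(x)` or `x = y = 0`. -/
def rvEq (v : Valuation K Γ) {n : ℕ} (x y : Fin n → K) : Prop :=
  vv v (x - y) < vv v x ∨ (x = 0 ∧ y = 0)

/-- Balls in `K` (with `K` itself counting as a ball). -/
def IsBall1 (v : Valuation K Γ) (B : Set K) : Prop :=
  B = Set.univ ∨ ∃ a : K, ∃ γ : Γ, γ ≠ 0 ∧
    (B = {x | v (x - a) < γ} ∨ B = {x | v (x - a) ≤ γ})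

/-- Balls in `Kⁿ` (with `Kⁿ` itself counting as a ball). -/
def IsBall (v : Valuation K Γ) {n : ℕ} (B : Set (Fin n → K)) : Prop :=
  B = Set.univ ∨ ∃ a : Fin n → K, ∃ γ : Γ, γ ≠ 0 ∧
    (B = {x | vv v (x - a) < γ} ∨ B = {x | vv v (x - a) ≤ γ})

/-- Spherical completeness: every nonempty chain of balls in `K` has nonempty
intersection. -/
def SphericallyComplete (v : Valuation K Γ) : Prop :=
  ∀ C : Set (Set K), C.Nonempty → (∀ B ∈ C, IsBall1 v B) → IsChain (· ⊆ ·) C →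
    (⋂ B ∈ C, B).Nonempty

/-- The residue field `K̄` of the valuation ring `𝒪 = {x | v x ≤ 1}`. -/
def Kbar (v : Valuation K Γ) : Type _ :=
  IsLocalRing.ResidueField v.valuationSubring

instance (v : Valuation K Γ) : Field (Kbar v) :=
  inferInstanceAs (Field (IsLocalRing.ResidueField v.valuationSubring))

/-- The residue map `res : 𝒪 → K̄`, extended by the junk value `0` outside `𝒪`. -/
def res' (v : Valuation K Γ) (x : K) : Kbar v :=
  if h : v x ≤ 1 then IsLocalRing.residue v.valuationSubring ⟨x, h⟩ else 0

/-- The coordinatewise residue map on `Kⁿ`. -/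
def resv (v : Valuation K Γ) {n : ℕ} (x : Fin n → K) : Fin n → Kbar v :=
  fun i => res' v (x i)

/-- `res(S)` for a set `S ⊆ Kⁿ`: the set of residues of points of `S ∩ 𝒪ⁿ`. -/
def resSet (v : Valuation K Γ) {n : ℕ} (S : Set (Fin n → K)) : Set (Fin n → Kbar v) :=
  resv v '' {x ∈ S | ∀ i, v (x i) ≤ 1}

/-- `dir(x) = res(K·x) ⊆ K̄ⁿ`. -/
def dirSet (v : Valuation K Γ) {n : ℕ} (x : Fin n → K) : Set (Fin n → Kbar v) :=
  resSet v {y | ∃ c : K, y = c • x}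

/-- The coordinate projection `Kⁿ → K^d` selecting the coordinates `σ 0 < σ 1 < ⋯`. -/
def proj {A : Type*} {n d : ℕ} (σ : Fin d → Fin n) (x : Fin n → A) : Fin d → A :=
  fun k => x (σ k)

/-- `σ` (a strictly increasing selection of `d` of the `n` coordinates) is an
exhibition of the `K̄`-subspace `Ū ⊆ K̄ⁿ` if the corresponding coordinate projection
`K̄ⁿ → K̄^d` restricts to an isomorphism from `Ū` onto `K̄^d`. -/
def IsExhibition (v : Valuation K Γ) {n d : ℕ} (σ : Fin d → Fin n)
    (Ubar : Submodule (Kbar v) (Fin n → Kbar v)) : Prop :=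
  StrictMono σ ∧ Set.BijOn (proj σ) (Ubar : Set (Fin n → Kbar v)) Set.univ

/-- `affdir(C)`: the `K̄`-subspace of `K̄ⁿ` generated by all `dir(x − x')`, `x, x' ∈ C`. -/
def affdir (v : Valuation K Γ) {n : ℕ} (C : Set (Fin n → K)) :
    Submodule (Kbar v) (Fin n → Kbar v) :=
  Submodule.span (Kbar v) (⋃ x ∈ C, ⋃ x' ∈ C, dirSet v (x - x'))

/-- A matrix has entries in the valuation ring `𝒪`. -/
def EntriesInO (v : Valuation K Γ) {n : ℕ} (M : Matrix (Fin n) (Fin n) K) : Prop :=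
  ∀ i j, v (M i j) ≤ 1

/-- `M ∈ GLₙ(𝒪)`: `M` is invertible, with entries in `𝒪`, and its inverse also has
entries in `𝒪`. -/
def MemGLO (v : Valuation K Γ) {n : ℕ} (M : Matrix (Fin n) (Fin n) K) : Prop :=
  EntriesInO v M ∧ ∃ N : Matrix (Fin n) (Fin n) K,
    M * N = 1 ∧ N * M = 1 ∧ EntriesInO v N

/-- The entrywise residue matrix of `M`. -/
def resM (v : Valuation K Γ) {n : ℕ} (M : Matrix (Fin n) (Fin n) K) :
    Matrix (Fin n) (Fin n) (Kbar v) :=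
  fun i j => res' v (M i j)

/-- `DeltaLE v U W γ` expresses `Δ(U, W) ≤ γ`: for every `u ∈ U` there is `w ∈ W`
with `v(u − w) ≤ v(u)·γ`. -/
def DeltaLE (v : Valuation K Γ) {n : ℕ} (U W : Submodule K (Fin n → K)) (γ : Γ) : Prop :=
  ∀ u ∈ U, ∃ w ∈ W, vv v (u - w) ≤ vv v u * γ

/-- `IsDelta v U W γ` expresses `Δ(U, W) = γ`: `γ` is the minimum of all admissible
bounds. -/
def IsDelta (v : Valuation K Γ) {n : ℕ} (U W : Submodule K (Fin n → K)) (γ : Γ) : Prop :=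
  DeltaLE v U W γ ∧ ∀ δ : Γ, DeltaLE v U W δ → γ ≤ δ

end Preamble

variable {K : Type*} [Field K] {Γ : Type*} [LinearOrderedCommGroupWithZero Γ]

section Helpers

theorem aux_vv_le {K : Type*} [Field K] {Γ : Type*} [LinearOrderedCommGroupWithZero Γ]
    (v : Valuation K Γ) {n : ℕ} (x : Fin n → K) (γ : Γ) :
    vv v x ≤ γ ↔ ∀ i, v (x i) ≤ γ := by
  unfold vv
  rw [Finset.sup_le_iff]
  simp

theorem aux_vv_add {K : Type*} [Field K] {Γ : Type*} [LinearOrderedCommGroupWithZero Γ]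
    (v : Valuation K Γ) {n : ℕ} (x y : Fin n → K) (γ : Γ) (hx : vv v x ≤ γ) (hy : vv v y ≤ γ) :
    vv v (x + y) ≤ γ := by
  rw [aux_vv_le] at *
  exact fun i => v.map_add_le (hx i) (hy i)

theorem aux_vv_neg {K : Type*} [Field K] {Γ : Type*} [LinearOrderedCommGroupWithZero Γ]
    (v : Valuation K Γ) {n : ℕ} (x y : Fin n → K) : vv v (x - y) = vv v (y - x) := by
  unfold vv
  congr 1
  funext i
  exact v.map_sub_swap _ _

theorem aux_ball_add {K : Type*} [Field K] {Γ : Type*} [LinearOrderedCommGroupWithZero Γ]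
    (v : Valuation K Γ) (B : Set K) (hB : IsBall1 v B) (x y z : K) (hx : x ∈ B) (hy : y ∈ B)
    (hz : z ∈ B) : x + y - z ∈ B := by
  rcases hB with rfl | ⟨a, γ, -, rfl | rfl⟩
  · trivial
  · simp only [Set.mem_setOf_eq] at *
    have : x + y - z - a = (x - a) + ((y - a) - (z - a)) := by ring
    rw [this]
    exact v.map_add_lt hx (lt_of_le_of_lt (v.map_sub _ _) (max_lt hy hz))
  · simp only [Set.mem_setOf_eq] at *
    have : x + y - z - a = (x - a) + ((y - a) - (z - a)) := by ring
    rw [this]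
    exact v.map_add_le hx (v.map_sub_le hy hz)

theorem aux_ball_cmp {K : Type*} [Field K] {Γ : Type*} [LinearOrderedCommGroupWithZero Γ]
    (v : Valuation K Γ) (B : Set K) (hB : IsBall1 v B) (x : K) (hx : x ∈ B) (γ : Γ) :
    {z | v (z - x) ≤ γ} ⊆ B ∨ B ⊆ {z | v (z - x) ≤ γ} := by
  rcases hB with rfl | ⟨a, δ, -, rfl | rfl⟩
  · exact Or.inl (Set.subset_univ _)
  · simp only [Set.mem_setOf_eq] at hx
    rcases lt_or_ge γ δ with h | h
    · left
      intro z hz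
      have : z - a = (z - x) + (x - a) := by ring
      simp only [Set.mem_setOf_eq] at *
      rw [this]
      exact v.map_add_lt (hz.trans_lt h) hx
    · right
      intro z hz
      have : z - x = (z - a) - (x - a) := by ring
      simp only [Set.mem_setOf_eq] at *
      rw [this]
      exact v.map_sub_le (hz.le.trans h) (hx.le.trans h)
  · simp only [Set.mem_setOf_eq] at hx
    rcases le_total γ δ with h | h
    · left
      intro z hz
      have : z - a = (z - x) + (x - a) := by ring
      simp only [Set.mem_setOf_eq] at *
      rw [this]
      exact v.map_add_le (hz.trans h) hx
    · right
      intro z hz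
      have : z - x = (z - a) - (x - a) := by ring
      simp only [Set.mem_setOf_eq] at *
      rw [this]
      exact v.map_sub_le (hz.trans h) (hx.trans h)

/-- A strictly contracting self-map of a product of balls has a fixed point. -/
theorem aux_fixed {K : Type*} [Field K] {Γ : Type*} [LinearOrderedCommGroupWithZero Γ]
    (v : Valuation K Γ) (hK : SphericallyComplete v) {n : ℕ}
    (B : Fin n → Set K) (hB : ∀ i, IsBall1 v (B i))
    (ψ : (Fin n → K) → Fin n → K)
    (hψ : ∀ x, (∀ i, x i ∈ B i) → ∀ i, ψ x i ∈ B i)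
    (hc : ∀ x x', (∀ i, x i ∈ B i) → (∀ i, x' i ∈ B i) → x ≠ x' →
      vv v (ψ x - ψ x') < vv v (x - x')) :
    ∃ x, (∀ i, x i ∈ B i) ∧ ψ x = x := by
  by_contra hno
  push Not at hno
  let r : (Fin n → K) → Γ := fun x => vv v (x - ψ x)
  have hr : ∀ x, (∀ i, x i ∈ B i) → r x ≠ 0 := by
    intro x hx h0
    apply hno x hx
    have h1 : vv v (x - ψ x) ≤ 0 := h0.le
    rw [aux_vv_le] at h1
    funext i
    have h2 := h1 i
    rw [le_zero_iff, v.zero_iff] at h2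
    exact (sub_eq_zero.mp h2).symm
  have key : ∀ x z, (∀ i, x i ∈ B i) → (∀ i, z i ∈ B i) → vv v (z - x) ≤ r x → r z ≤ r x := by
    intro x z hx hz h
    by_cases hxz : x = z
    · rw [hxz]
    have h1 : z - ψ z = (z - x) + ((x - ψ x) + (ψ x - ψ z)) := by abel
    change vv v (z - ψ z) ≤ _
    rw [h1]
    refine aux_vv_add v _ _ _ h (aux_vv_add v _ _ _ le_rfl ?_)
    exact (hc x z hx hz hxz).le.trans (by rw [aux_vv_neg]; exact h)
  let R : {x : Fin n → K // ∀ i, x i ∈ B i} → {x : Fin n → K // ∀ i, x i ∈ B i} → Prop :=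
    fun x z => vv v (z.1 - x.1) ≤ r x.1
  have hR : ∀ {a b c}, R a b → R b c → R a c := by
    intro a b c hab hbc
    have h1 : c.1 - a.1 = (c.1 - b.1) + (b.1 - a.1) := by abel
    change vv v (c.1 - a.1) ≤ _
    rw [h1]
    exact aux_vv_add v _ _ _ (le_trans hbc (key _ _ a.2 b.2 hab)) hab
  have hsub : ∀ a b, R a b → ∀ i, {z | v (z - b.1 i) ≤ r b.1} ⊆ {z | v (z - a.1 i) ≤ r a.1} := by
    intro a b hab i z hz
    have h1 : z - a.1 i = (z - b.1 i) + (b.1 i - a.1 i) := by ring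
    simp only [Set.mem_setOf_eq] at *
    rw [h1]
    exact v.map_add_le (hz.trans (key _ _ a.2 b.2 hab)) ((aux_vv_le v _ _).mp hab i)
  obtain ⟨m, hm⟩ : ∃ m, ∀ a, R m a → R a m := by
    refine exists_maximal_of_chains_bounded ?_ hR
    intro S hS
    have hw : ∀ i, ∃ w, w ∈ B i ∧ ∀ x ∈ S, v (w - x.1 i) ≤ r x.1 := by
      intro i
      obtain ⟨w, hw⟩ := hK (insert (B i) ((fun x => {z | v (z - x.1 i) ≤ r x.1}) '' S))
        (Set.insert_nonempty _ _)
        (by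
          rintro _ (rfl | ⟨x, -, rfl⟩)
          · exact hB i
          · exact Or.inr ⟨x.1 i, r x.1, hr _ x.2, Or.inr rfl⟩)
        (by
          rintro _ (rfl | ⟨x, hx, rfl⟩) _ (rfl | ⟨y, hy, rfl⟩) hne
          · exact absurd rfl hne
          · exact (aux_ball_cmp v _ (hB i) _ (y.2 i) _).symm
          · exact aux_ball_cmp v _ (hB i) _ (x.2 i) _
          · have hxy : x ≠ y := by
              rintro rfl
              exact hne rfl
            rcases hS hx hy hxy with h | h
            · exact Or.inr (hsub _ _ h i)
            · exact Or.inl (hsub _ _ h i))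
      rw [Set.mem_iInter₂] at hw
      exact ⟨w, hw _ (Set.mem_insert _ _),
        fun x hx => hw _ (Set.mem_insert_of_mem _ ⟨x, hx, rfl⟩)⟩
    choose w hwB hwS using hw
    exact ⟨⟨w, hwB⟩, fun a ha => (aux_vv_le v _ _).mpr fun i => hwS i a ha⟩
  have h1 := hm ⟨ψ m.1, hψ _ m.2⟩ (by
    change vv v (ψ m.1 - m.1) ≤ vv v (m.1 - ψ m.1)
    rw [aux_vv_neg])
  exact absurd (hc m.1 (ψ m.1) m.2 (hψ _ m.2) (hno _ m.2).symm) (not_lt.mpr h1)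

end Helpers

/-- a risometry from a product of balls `E` into itself is onto `E`. -/
theorem risometry_of_product_of_balls_is_surjective
    (v : Valuation K Γ) (hK : SphericallyComplete v) {n : ℕ}
    (B : Fin n → Set K) (hB : ∀ i, IsBall1 v (B i))
    (E : Set (Fin n → K)) (hE : E = {x | ∀ i, x i ∈ B i})
    (φ : (Fin n → K) → Fin n → K) (X : Set (Fin n → K))
    (hX : X = φ '' E) (hXE : X ⊆ E)
    (hriso : ∀ x ∈ E, ∀ x' ∈ E, rvEq v (φ x - φ x') (x - x')) :
    X = E := by
  subst hE
  refine hXE.antisymm fun y hy => ?_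
  subst hX
  obtain ⟨x, hx, hfix⟩ := aux_fixed v hK B hB (fun x => x + y - φ x)
    (fun x hx i => aux_ball_add v _ (hB i) _ _ _ (hx i) (hy i) (hXE ⟨x, hx, rfl⟩ i))
    (by
      intro x x' hx hx' hne
      have e : (x + y - φ x) - (x' + y - φ x') = (x - x') - (φ x - φ x') := by abel
      simp only [e]
      rcases hriso x hx x' hx' with h | ⟨-, h⟩
      · rw [aux_vv_neg v (x - x')]
        refine h.trans_le ?_
        by_contra hlt
        push Not at hlt
        have h2 : φ x - φ x' = ((φ x - φ x') - (x - x')) + (x - x') := by abel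
        have h3 := aux_vv_add v _ _ _
          (le_max_left (vv v ((φ x - φ x') - (x - x'))) (vv v (x - x'))) (le_max_right _ _)
        rw [← h2] at h3
        exact absurd h3 (not_le.mpr (max_lt h hlt))
      · exact absurd (sub_eq_zero.mp h) hne)
  refine ⟨x, hx, ?_⟩
  have h1 : x + y - φ x = x := hfix
  have h2 : y - φ x = 0 := by
    have : y - φ x = (x + y - φ x) - x := by abel
    rw [this, h1, sub_self]
  exact (sub_eq_zero.mp h2).symm

end
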